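/- For every n ∈ ℤ and every t ∈ ℝ, the principal-value limit lim_{ε→0⁺} (i/π) ∫_{{y : |t−y| > ε}} a_n(y)/(t − y) dy exists and equals a_n(t) if n ≥ 0, and equals −a_n(t) if n < 0. In other words, each a_n is an eigenfunction of the Hilbert transformation H f(t) = (i/π) p.v. ∫_ℝ f(y)/(t − y) dy with eigenvalue +1 for n ≥ 0 and −1 for n < 0. -/

import Mathlib

open MeasureTheory

namespace HilbAux
open Complex Filter Topology

noncomputable def b (n : ℤ) (y : ℝ) : ℂ := ((y : ℂ) - I) ^ n / ((y : ℂ) + I) ^ (n + 1)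

lemma addI_ne (c : ℂ) (hc : c.im ≠ 0) (y : ℝ) : (y : ℂ) + c ≠ 0 := by
  intro h
  have := congrArg Complex.im h
  simp at this
  exact hc this

lemma pI (y : ℝ) : (y : ℂ) + I ≠ 0 := addI_ne I (by simp) y
lemma mI (y : ℝ) : (y : ℂ) - I ≠ 0 := by
  rw [sub_eq_add_neg]; exact addI_ne (-I) (by simp) y

lemma norm_mI (y : ℝ) : ‖(y : ℂ) - I‖ = ‖(y : ℂ) + I‖ := by
  rw [← Complex.norm_conj]; simp

lemma norm_sq (y : ℝ) : ‖(y : ℂ) + I‖ ^ 2 = 1 + y ^ 2 := by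
  rw [← Complex.normSq_eq_norm_sq, Complex.normSq_apply]; simp; ring

lemma norm_b (n : ℤ) (y : ℝ) : ‖b n y‖ = ‖(y : ℂ) + I‖⁻¹ := by
  have h : ‖(y : ℂ) + I‖ ≠ 0 := norm_ne_zero_iff.2 (pI y)
  rw [b, norm_div, norm_zpow, norm_zpow, norm_mI, zpow_add_one₀ h]
  field_simp

lemma cont_b (n : ℤ) : Continuous (b n) := by
  unfold b
  refine Continuous.div ?_ ?_ (fun y => zpow_ne_zero _ (pI y))
  · exact Continuous.zpow₀ (by fun_prop) _ (fun y => Or.inl (mI y))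
  · exact Continuous.zpow₀ (by fun_prop) _ (fun y => Or.inl (pI y))

lemma int_J (n : ℤ) : Integrable (fun y : ℝ => b n y / ((y : ℂ) + I)) := by
  refine integrable_inv_one_add_sq.mono' ?_ (Eventually.of_forall fun y => ?_)
  · exact ((cont_b n).div (by fun_prop) pI).aestronglyMeasurable
  · rw [norm_div, norm_b, ← norm_sq]
    apply le_of_eq
    have h : ‖(y : ℂ) + I‖ ≠ 0 := norm_ne_zero_iff.2 (pI y)
    field_simp

def S (t ε : ℝ) : Set ℝ := {y : ℝ | ε < |t - y|}

lemma meas_S (t ε : ℝ) : MeasurableSet (S t ε) :=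
  measurableSet_lt measurable_const (by fun_prop)

lemma int_K (n : ℤ) (t ε : ℝ) (hε : 0 < ε) :
    IntegrableOn (fun y : ℝ => b n y / ((t : ℂ) - y)) (S t ε) := by
  have hI : Integrable (fun y : ℝ => (1 + ‖(t : ℂ) + I‖ / ε) * (1 + y ^ 2)⁻¹) :=
    integrable_inv_one_add_sq.const_mul _
  refine Integrable.mono' hI.integrableOn ?_ ?_
  · have := (cont_b n).measurable
    exact (this.div (by fun_prop)).aestronglyMeasurable
  · refine (ae_restrict_iff' (meas_S t ε)).2 (Eventually.of_forall fun y hy => ?_)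
    have hy' : ε < ‖(t : ℂ) - y‖ := by
      rw [← Complex.ofReal_sub, Complex.norm_real]; exact hy
    have hp : 0 < ‖(y : ℂ) + I‖ := norm_pos_iff.2 (pI y)
    have h0 : 0 < ‖(t : ℂ) - y‖ := hε.trans hy'
    rw [norm_div, norm_b, ← norm_sq]
    have h1 : ‖(y : ℂ) + I‖ ≤ ‖(t : ℂ) - y‖ + ‖(t : ℂ) + I‖ := by
      have := norm_sub_le ((t : ℂ) + I) ((t : ℂ) - y)
      have e : ((t : ℂ) + I) - ((t : ℂ) - y) = y + I := by ring
      rw [e] at this; linarith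
    have h2 : ‖(t : ℂ) + I‖ ≤ ‖(t : ℂ) + I‖ / ε * ‖(t : ℂ) - y‖ := by
      rw [div_mul_eq_mul_div, le_div_iff₀ hε]
      exact mul_le_mul_of_nonneg_left hy'.le (norm_nonneg _)
    have h3 : ‖(y : ℂ) + I‖ ≤ (1 + ‖(t : ℂ) + I‖ / ε) * ‖(t : ℂ) - y‖ := by linarith
    rw [div_le_iff₀ h0]
    have : (1 + ‖(t : ℂ) + I‖ / ε) * (‖(y : ℂ) + I‖ ^ 2)⁻¹ * ‖(t : ℂ) - y‖
      = ((1 + ‖(t : ℂ) + I‖ / ε) * ‖(t : ℂ) - y‖) * (‖(y : ℂ) + I‖ ^ 2)⁻¹ := by ring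
    rw [this]
    calc ‖(y : ℂ) + I‖⁻¹ = ‖(y : ℂ) + I‖ * (‖(y : ℂ) + I‖ ^ 2)⁻¹ := by field_simp
      _ ≤ _ := mul_le_mul_of_nonneg_right h3 (by positivity)

lemma tendsto_S (g : ℝ → ℂ) (hg : Integrable g) (t : ℝ) :
    Tendsto (fun ε => ∫ y in S t ε, g y) (𝓝[>] 0) (𝓝 (∫ y, g y)) := by
  simp_rw [← integral_indicator (meas_S t _)]
  refine tendsto_integral_filter_of_dominated_convergence (fun y => ‖g y‖) ?_ ?_ hg.norm ?_
  · exact Eventually.of_forall fun ε => hg.aestronglyMeasurable.indicator (meas_S t ε)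
  · exact Eventually.of_forall fun ε => Eventually.of_forall fun y => norm_indicator_le_norm_self _ _
  · have : ∀ᵐ y : ℝ, y ≠ t := by simp [ae_iff]
    filter_upwards [this] with y hy
    refine tendsto_const_nhds.congr' ?_
    have h : 0 < |t - y| := abs_pos.2 (sub_ne_zero.2 hy.symm)
    filter_upwards [mem_nhdsWithin_of_mem_nhds (Iio_mem_nhds h)] with ε hε
    rw [Set.indicator_of_mem]; exact hε

lemma tendsto_inv_top (c : ℂ) : Tendsto (fun u : ℝ => ((u : ℂ) + c)⁻¹) atTop (𝓝 0) := by
  refine tendsto_inv₀_cobounded.comp ?_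
  rw [← tendsto_norm_atTop_iff_cobounded]
  refine tendsto_atTop_mono (fun u => ?_) (tendsto_atTop_add_const_right _ (-‖c‖) tendsto_abs_atTop_atTop)
  have := norm_sub_norm_le (u : ℂ) (-c)
  simpa [sub_eq_add_neg] using this

lemma tendsto_inv_bot (c : ℂ) : Tendsto (fun u : ℝ => ((u : ℂ) + c)⁻¹) atBot (𝓝 0) := by
  refine tendsto_inv₀_cobounded.comp ?_
  rw [← tendsto_norm_atTop_iff_cobounded]
  refine tendsto_atTop_mono (fun u => ?_) (tendsto_atTop_add_const_right _ (-‖c‖) tendsto_abs_atBot_atTop)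
  have := norm_sub_norm_le (u : ℂ) (-c)
  simpa [sub_eq_add_neg] using this

lemma J_ne (n : ℤ) (hn : n ≠ -1) : ∫ y : ℝ, b n y / ((y : ℂ) + I) = 0 := by
  have hn1 : (n : ℂ) + 1 ≠ 0 := by
    intro h; apply hn; have : ((n + 1 : ℤ) : ℂ) = 0 := by push_cast; exact h
    have := Int.cast_eq_zero.1 this
    omega
  set W : ℝ → ℂ := fun y => 1 - 2 * I * ((y : ℂ) + I)⁻¹ with hW
  have hWe : ∀ y, W y = ((y : ℂ) - I) / ((y : ℂ) + I) := by
    intro y; have := pI y; simp only [hW]; field_simp; ring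
  have hW0 : ∀ y, W y ≠ 0 := fun y => by rw [hWe]; exact div_ne_zero (mI y) (pI y)
  have hd : ∀ y : ℝ, HasDerivAt (fun y : ℝ => (2 * I * ((n : ℂ) + 1))⁻¹ * W y ^ (n + 1))
      (b n y / ((y : ℂ) + I)) y := by
    intro y
    have h1 : HasDerivAt (fun y : ℝ => (y : ℂ) + I) 1 y := (hasDerivAt_id y).ofReal_comp.add_const I
    have h2 : HasDerivAt W (-(2 * I * (-1 / ((y : ℂ) + I) ^ 2))) y :=
      ((h1.inv (pI y)).const_mul (2 * I)).const_sub 1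
    have h3 := ((hasDerivAt_zpow (n + 1) (W y) (Or.inl (hW0 y))).comp y h2).const_mul
      (2 * I * ((n : ℂ) + 1))⁻¹
    refine h3.congr_deriv ?_
    rw [hWe, b, add_sub_cancel_right, zpow_add_one₀ (pI y), div_zpow]
    have := pI y
    have := zpow_ne_zero n (pI y)
    push_cast
    field_simp [I_ne_zero]
  have hlim : ∀ l : Filter ℝ, Tendsto (fun u : ℝ => ((u : ℂ) + I)⁻¹) l (𝓝 0) →
      Tendsto (fun y : ℝ => (2 * I * ((n : ℂ) + 1))⁻¹ * W y ^ (n + 1)) l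
        (𝓝 ((2 * I * ((n : ℂ) + 1))⁻¹ * 1)) := by
    intro l hl
    have h1 : Tendsto W l (𝓝 1) := by
      have := (hl.const_mul (2 * I)).const_sub 1
      simpa using this
    have := (h1.zpow₀ (n + 1) (Or.inl one_ne_zero)).const_mul (2 * I * ((n : ℂ) + 1))⁻¹
    simpa using this
  rw [integral_of_hasDerivAt_of_tendsto hd (int_J n) (hlim _ (tendsto_inv_bot I))
    (hlim _ (tendsto_inv_top I)), sub_self]

lemma J_eq : ∫ y : ℝ, b (-1) y / ((y : ℂ) + I) = Real.pi := by
  rw [← integral_univ_inv_one_add_sq, ← integral_complex_ofReal]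
  congr 1; ext y
  have := pI y
  have := mI y
  have e : ((1 + y ^ 2 : ℝ) : ℂ) = (y - I) * (y + I) := by
    push_cast; ring_nf; simp; ring
  rw [Complex.ofReal_inv, e, b]; simp
  field_simp

lemma step (n : ℤ) (t ε : ℝ) (hε : 0 < ε) :
    ∫ y in S t ε, b (n + 1) y / ((t : ℂ) - y) =
      (((t : ℂ) - I) / ((t : ℂ) + I)) * (∫ y in S t ε, b n y / ((t : ℂ) - y))
      - (2 * I / ((t : ℂ) + I)) * ∫ y in S t ε, b n y / ((y : ℂ) + I) := by
  rw [← integral_const_mul, ← integral_const_mul, ← integral_sub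
    ((int_K n t ε hε).const_mul _) ((int_J n).integrableOn.const_mul _)]
  refine setIntegral_congr_fun (meas_S t ε) fun y hy => ?_
  have hy' : (t : ℂ) - y ≠ 0 := by
    rw [← norm_pos_iff, ← Complex.ofReal_sub, Complex.norm_real]; exact hε.trans hy
  have h1 := pI y
  have h2 := pI t
  have e : b (n + 1) y = b n y * ((y - I) / (y + I)) := by
    rw [b, b, zpow_add_one₀ h1 (n + 1), zpow_add_one₀ (mI y)]
    have := zpow_ne_zero (n + 1) h1
    field_simp
  simp only [e]
  field_simp
  ring_nf

lemma b_succ (n : ℤ) (t : ℝ) : b (n + 1) t = ((t : ℂ) - I) / ((t : ℂ) + I) * b n t := by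
  have h1 := pI t
  rw [b, b, zpow_add_one₀ h1 (n + 1), zpow_add_one₀ (mI t)]
  have := zpow_ne_zero (n + 1) h1
  field_simp

lemma norm_sq' (t y : ℝ) : ‖(y : ℂ) + (-(2 * t) - I)‖ ^ 2 = 1 + (2 * t - y) ^ 2 := by
  rw [← Complex.normSq_eq_norm_sq, Complex.normSq_apply]; simp; ring

noncomputable def G (t y : ℝ) : ℂ := (((y : ℂ) + I) * (2 * t - y + I))⁻¹

lemma qI (t y : ℝ) : (2 * (t : ℂ) - y + I) ≠ 0 := by
  have := pI (2 * t - y)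
  push_cast at this; exact this

lemma int_G (t : ℝ) : Integrable (G t) := by
  have h1 := integrable_inv_one_add_sq
  have h2 := h1.comp_sub_left (2 * t)
  refine (h1.add h2).mono' ?_ (Eventually.of_forall fun y => ?_)
  · refine Continuous.aestronglyMeasurable ?_
    unfold G
    exact Continuous.inv₀ (by fun_prop) fun y => mul_ne_zero (pI y) (qI t y)
  · have e : (2 * (t : ℂ) - y + I) = ((2 * t - y : ℝ) : ℂ) + I := by push_cast; ring
    simp only [G, Pi.add_apply]
    rw [e, norm_inv, norm_mul, mul_inv, ← norm_sq, ← norm_sq, ← inv_pow, ← inv_pow]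
    nlinarith [sq_nonneg (‖(y : ℂ) + I‖⁻¹ - ‖((2 * t - y : ℝ) : ℂ) + I‖⁻¹),
      sq_nonneg (‖(y : ℂ) + I‖⁻¹), sq_nonneg (‖((2 * t - y : ℝ) : ℂ) + I‖⁻¹)]

lemma log_lim (t : ℝ) (l : Filter ℝ)
    (hl : Tendsto (fun u : ℝ => ((u : ℂ) + (-(2 * t) - I))⁻¹) l (𝓝 0)) :
    Tendsto (fun y : ℝ => Real.log (1 + y ^ 2) - Real.log (1 + (2 * t - y) ^ 2)) l (𝓝 0) := by
  have h1 : Tendsto (fun u : ℝ => 1 + (I - (-(2 * t) - I)) * ((u : ℂ) + (-(2 * t) - I))⁻¹) l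
      (𝓝 1) := by
    simpa using (hl.const_mul (I - (-(2 * t) - I))).const_add 1
  have h2 := ((h1.norm.pow 2).log (by simp))
  simp only [norm_one, one_pow, Real.log_one] at h2
  refine h2.congr fun u => ?_
  have hne : (u : ℂ) + (-(2 * t) - I) ≠ 0 := addI_ne _ (by simp) u
  have e : 1 + (I - (-(2 * t) - I)) * ((u : ℂ) + (-(2 * t) - I))⁻¹ =
      ((u : ℂ) + I) / ((u : ℂ) + (-(2 * t) - I)) := by
    rw [eq_div_iff hne, add_mul, mul_assoc, inv_mul_cancel₀ hne]; ring
  rw [e, norm_div, div_pow, norm_sq, norm_sq', Real.log_div (by positivity) (by positivity)]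

lemma G_eq (t : ℝ) : ∫ y, G t y = -(Real.pi * I) / ((t : ℂ) + I) := by
  set F : ℝ → ℂ := fun y => (2 * ((t : ℂ) + I))⁻¹ *
    (((Real.log (1 + y ^ 2) - Real.log (1 + (2 * t - y) ^ 2) : ℝ) : ℂ) / 2
      - I * ((Real.arctan y - Real.arctan (2 * t - y) : ℝ) : ℂ)) with hF
  have hd : ∀ y, HasDerivAt F (G t y) y := by
    intro y
    have k1 : HasDerivAt (fun y : ℝ => 1 + y ^ 2) (2 * y) y := by
      simpa using ((hasDerivAt_id y).pow 2).const_add 1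
    have k0 : HasDerivAt (fun y : ℝ => 2 * t - y) (-1) y := (hasDerivAt_id y).const_sub _
    have k2 : HasDerivAt (fun y : ℝ => 1 + (2 * t - y) ^ 2) (-(2 * (2 * t - y))) y := by
      simpa using (k0.pow 2).const_add 1
    have l1 := (k1.log (by positivity)).sub (k2.log (by positivity))
    have l2 := (Real.hasDerivAt_arctan y).sub (k0.arctan)
    have l3 := ((l1.ofReal_comp.div_const 2).sub (l2.ofReal_comp.const_mul I)).const_mul
      (2 * ((t : ℂ) + I))⁻¹
    refine l3.congr_deriv ?_
    have n1 := pI y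
    have n2 := mI y
    have n3 := qI t y
    have n4 : (2 * (t : ℂ) - y - I) ≠ 0 := by
      have := mI (2 * t - y)
      push_cast at this; exact this
    have n5 := pI t
    have e1 : (1 + (y : ℂ) ^ 2) = (y + I) * (y - I) := by ring_nf; simp; ring
    have e2 : (1 + (2 * (t : ℂ) - y) ^ 2) = (2 * t - y + I) * (2 * t - y - I) := by
      ring_nf; simp; ring
    push_cast
    rw [e1, e2, G]
    have p1 : (2 * (y : ℂ) / ((y + I) * (y - I))) / 2 - I * (1 / ((y + I) * (y - I))) = (y + I)⁻¹ := by
      field_simp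
    have p2 : (-(2 * (2 * (t : ℂ) - y)) / ((2 * t - y + I) * (2 * t - y - I))) / 2
        - I * (1 / ((2 * t - y + I) * (2 * t - y - I)) * (-1)) = - (2 * t - y + I)⁻¹ := by
      field_simp; ring
    have p3 : (y + I)⁻¹ - (-(2 * (t : ℂ) - y + I)⁻¹) = 2 * (t + I) * ((y + I) * (2 * t - y + I))⁻¹ := by
      field_simp; ring
    have n6 : 2 * ((t : ℂ) + I) ≠ 0 := mul_ne_zero two_ne_zero n5
    rw [inv_mul_eq_iff_eq_mul₀ n6, ← p3, ← p1, ← p2]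
    ring
  have f1 : Tendsto F atTop (𝓝 ((2 * ((t : ℂ) + I))⁻¹ * (((0 : ℝ) : ℂ) / 2 -
      I * ((Real.pi / 2 - -(Real.pi / 2) : ℝ) : ℂ)))) := by
    have m1 := Real.tendsto_arctan_atTop.mono_right nhdsWithin_le_nhds
    have m2 : Tendsto (fun y : ℝ => 2 * t - y) atTop atBot := by
      simpa [sub_eq_add_neg] using tendsto_atBot_add_const_left _ (2 * t) tendsto_neg_atTop_atBot
    have m3 := (Real.tendsto_arctan_atBot.mono_right nhdsWithin_le_nhds).comp m2
    have m4 := log_lim t _ (tendsto_inv_top _)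
    exact ((((Complex.continuous_ofReal.tendsto _).comp m4).div_const 2).sub
      (((Complex.continuous_ofReal.tendsto _).comp (m1.sub m3)).const_mul I)).const_mul _
  have f2 : Tendsto F atBot (𝓝 ((2 * ((t : ℂ) + I))⁻¹ * (((0 : ℝ) : ℂ) / 2 -
      I * ((-(Real.pi / 2) - (Real.pi / 2) : ℝ) : ℂ)))) := by
    have m1 := Real.tendsto_arctan_atBot.mono_right nhdsWithin_le_nhds
    have m2 : Tendsto (fun y : ℝ => 2 * t - y) atBot atTop := by
      simpa [sub_eq_add_neg] using tendsto_atTop_add_const_left _ (2 * t) tendsto_neg_atBot_atTop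
    have m3 := (Real.tendsto_arctan_atTop.mono_right nhdsWithin_le_nhds).comp m2
    have m4 := log_lim t _ (tendsto_inv_bot _)
    exact ((((Complex.continuous_ofReal.tendsto _).comp m4).div_const 2).sub
      (((Complex.continuous_ofReal.tendsto _).comp (m1.sub m3)).const_mul I)).const_mul _
  rw [integral_of_hasDerivAt_of_tendsto hd (int_G t) f2 f1]
  have n5 := pI t
  push_cast
  field_simp
  ring

lemma alg (p q d : ℂ) (hp : p ≠ 0) (hq : q ≠ 0) (hd : d ≠ 0) (h : q - p = 2 * d) :
    1 / p / d + 1 / q / (-d) = 2 * (p * q)⁻¹ := by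
  field_simp
  linear_combination h

lemma K_zero (t ε : ℝ) (hε : 0 < ε) :
    ∫ y in S t ε, b 0 y / ((t : ℂ) - y) = ∫ y in S t ε, G t y := by
  have hi := int_K 0 t ε hε
  set f : ℝ → ℂ := fun y => b 0 y / ((t : ℂ) - y) with hf
  have hS : ∀ y, (S t ε).indicator f (2 * t - y) = (S t ε).indicator (fun y => f (2 * t - y)) y := by
    intro y
    have : 2 * t - y ∈ S t ε ↔ y ∈ S t ε := by
      simp only [S, Set.mem_ofPred_eq]
      rw [show t - (2 * t - y) = -(t - y) by ring, abs_neg]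
    by_cases h : y ∈ S t ε
    · rw [Set.indicator_of_mem h, Set.indicator_of_mem (this.2 h)]
    · rw [Set.indicator_of_notMem h, Set.indicator_of_notMem (fun h' => h (this.1 h'))]
  have hi2 : IntegrableOn (fun y => f (2 * t - y)) (S t ε) := by
    rw [← integrable_indicator_iff (meas_S t ε)] at hi ⊢
    refine (hi.comp_sub_left (2 * t)).congr (Eventually.of_forall hS)
  have h2 : ∫ y in S t ε, f (2 * t - y) = ∫ y in S t ε, f y := by
    rw [← integral_indicator (meas_S t ε), ← integral_indicator (meas_S t ε),
      ← integral_sub_left_eq_self ((S t ε).indicator f) volume (2 * t)]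
    exact integral_congr_ae (Eventually.of_forall fun y => (hS y).symm)
  have h3 : ∫ y in S t ε, (f y + f (2 * t - y)) = ∫ y in S t ε, 2 * G t y := by
    refine setIntegral_congr_fun (meas_S t ε) fun y hy => ?_
    have hy' : (t : ℂ) - y ≠ 0 := by
      rw [← norm_pos_iff, ← Complex.ofReal_sub, Complex.norm_real]; exact hε.trans hy
    have h1 := pI y
    have h2 := qI t y
    have e : (t : ℂ) - (2 * t - y) = -(t - y) := by ring
    simp only [hf, b, G, zpow_zero, zero_add, zpow_one]
    push_cast
    rw [e]
    exact alg _ _ _ h1 h2 hy' (by ring)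
  rw [integral_add hi hi2, h2, integral_const_mul] at h3
  linear_combination h3 / 2

noncomputable def s (n : ℤ) : ℂ := if 0 ≤ n then -(Real.pi * I) else Real.pi * I

def P (t : ℝ) (n : ℤ) : Prop :=
  Tendsto (fun ε => ∫ y in S t ε, b n y / ((t : ℂ) - y)) (𝓝[>] 0) (𝓝 (s n * b n t))

lemma P_zero (t : ℝ) : P t 0 := by
  have h := tendsto_S _ (int_G t) t
  rw [G_eq] at h
  have e : s 0 * b 0 t = -(Real.pi * I) / ((t : ℂ) + I) := by
    simp [s, b]; ring
  rw [P, e]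
  refine h.congr' ?_
  filter_upwards [self_mem_nhdsWithin] with ε hε
  exact (K_zero t ε hε).symm

lemma key (t : ℝ) (n : ℤ) : s (n + 1) * b (n + 1) t =
    (((t : ℂ) - I) / ((t : ℂ) + I)) * (s n * b n t)
      - (2 * I / ((t : ℂ) + I)) * ∫ y : ℝ, b n y / ((y : ℂ) + I) := by
  have h1 := pI t
  have h2 := mI t
  by_cases hn : n = -1
  · subst hn
    rw [J_eq]
    simp [s, b]
    field_simp
    ring
  · rw [J_ne n hn, b_succ]
    have : s (n + 1) = s n := by
      unfold s
      have : 0 ≤ n + 1 ↔ 0 ≤ n := by omega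
      simp only [this]
    rw [this]; ring

lemma P_up (t : ℝ) (n : ℤ) (h : P t n) : P t (n + 1) := by
  have h1 := (h.const_mul (((t : ℂ) - I) / ((t : ℂ) + I))).sub
    ((tendsto_S _ (int_J n) t).const_mul (2 * I / ((t : ℂ) + I)))
  rw [← key] at h1
  refine h1.congr' ?_
  filter_upwards [self_mem_nhdsWithin] with ε hε
  exact (step n t ε hε).symm

lemma P_down (t : ℝ) (n : ℤ) (h : P t (n + 1)) : P t n := by
  have hw : ((t : ℂ) - I) / ((t : ℂ) + I) ≠ 0 := div_ne_zero (mI t) (pI t)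
  have h1 := (h.add ((tendsto_S _ (int_J n) t).const_mul (2 * I / ((t : ℂ) + I)))).const_mul
    (((t : ℂ) - I) / ((t : ℂ) + I))⁻¹
  rw [key, sub_add_cancel, inv_mul_cancel_left₀ hw] at h1
  refine h1.congr' ?_
  filter_upwards [self_mem_nhdsWithin] with ε hε
  rw [step n t ε hε, sub_add_cancel, inv_mul_cancel_left₀ hw]

lemma P_all (t : ℝ) (n : ℤ) : P t n := by
  induction n using Int.induction_on with
  | zero => exact P_zero t
  | succ k ih => exact P_up t _ ih
  | pred k ih => exact P_down t _ (by simpa using ih)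

end HilbAux

theorem stmt_6 (a : ℤ → ℝ → ℂ)
    (ha : ∀ (n : ℤ) (t : ℝ),
      a n t = ((t : ℂ) - Complex.I) ^ n / ((t : ℂ) + Complex.I) ^ (n + 1))
    (n : ℤ) (t : ℝ) :
    Filter.Tendsto
      (fun ε : ℝ =>
        (Complex.I / Real.pi) *
          ∫ y in {y : ℝ | ε < |t - y|}, a n y / ((t : ℂ) - (y : ℂ)))
      (nhdsWithin 0 (Set.Ioi 0))
      (nhds (if 0 ≤ n then a n t else - a n t)) := by
  obtain rfl : a = HilbAux.b := by
    funext n t; exact ha n t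
  have h := (HilbAux.P_all t n).const_mul (Complex.I / Real.pi)
  have hpi : (Real.pi : ℂ) ≠ 0 := Complex.ofReal_ne_zero.2 Real.pi_ne_zero
  suffices hh : (if 0 ≤ n then HilbAux.b n t else - HilbAux.b n t) =
      Complex.I / Real.pi * (HilbAux.s n * HilbAux.b n t) by
    rw [hh]; exact h
  have e : Complex.I / Real.pi * (Real.pi * Complex.I) = -1 := by
    field_simp; simp
  rw [← mul_assoc]
  unfold HilbAux.s
  split_ifs
  · rw [mul_neg, e]; simp
  · rw [e]; simp
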